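/- arXiv:2108.09005 — 2 statements merged into one kernel-verified Lean document; each statement's English description precedes it below -/
import Mathlib

section
/- For every nonzero α ∈ ℝ^p, the classification error satisfies 0 < E(α) ≤ 1/2. -/
open MeasureTheory ProbabilityTheory Matrix Filter Set

noncomputable def Phi (t : ℝ) : ℝ := ((gaussianReal 0 1) (Set.Iic t)).toReal
noncomputable def calE (r g : ℝ) : ℝ :=
  if g = 1 then Phi (-(|r| / 2))
  else
    1/2
      + (1/2) * Phi ((r - g * Real.sqrt (r^2 + (g^2 - 1) * Real.log (g^2))) / (g^2 - 1))
      - (1/2) * Phi ((r + g * Real.sqrt (r^2 + (g^2 - 1) * Real.log (g^2))) / (g^2 - 1))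
      + (1/2) * Phi ((r * g + Real.sqrt (r^2 + (g^2 - 1) * Real.log (g^2))) / (g^2 - 1))
      - (1/2) * Phi ((r * g - Real.sqrt (r^2 + (g^2 - 1) * Real.log (g^2))) / (g^2 - 1))
noncomputable def Evec {p : ℕ} (μ0 μ1 : Fin p → ℝ) (S0 S1 : Matrix (Fin p) (Fin p) ℝ)
    (α : Fin p → ℝ) : ℝ :=
  calE ((dotProduct α μ0 - dotProduct α μ1) / Real.sqrt (dotProduct α (S1.mulVec α)))
    (Real.sqrt (dotProduct α (S0.mulVec α)) / Real.sqrt (dotProduct α (S1.mulVec α)))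

/-!
`calE r g` is the Bayes error, under equal priors, for discriminating `N(0, 1)` from `N(-r, g²)`.
If the likelihood ratio is at least `1` on `A` and at most `1` off `A`, then the error
probabilities of the rule that decides by `A` add up to the integral of the pointwise minimum of
the two densities. For two Gaussians the log-likelihood ratio is quadratic, so that `A` is an
interval between its two roots (a half-line when `g = 1`), and the formula for `calE` is recovered.
The minimum of two positive probability densities is positive and lies below either of them, so
half its integral lies in `(0, 1/2]`.
-/

open scoped NNReal

section BayesError

variable {Ω : Type*} [MeasurableSpace Ω] {μ : Measure Ω} {f g : Ω → ℝ}

/-- The Bayes error for discriminating, under equal priors, two populations with densities `f` and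
`g` with respect to `μ`: the least error probability that a classification rule can have. It is
encoded by the closed form in which the best rule picks the larger density at each point. -/
noncomputable def bayesError (μ : Measure Ω) (f g : Ω → ℝ) : ℝ :=
  (∫ x, min (f x) (g x) ∂μ) / 2

lemma bayesError_comm (μ : Measure Ω) (f g : Ω → ℝ) : bayesError μ f g = bayesError μ g f := by
  simp only [bayesError, min_comm]

lemma bayesError_pos [NeZero μ] (hf : Integrable f μ) (hg : Integrable g μ)
    (hf0 : ∀ x, 0 < f x) (hg0 : ∀ x, 0 < g x) : 0 < bayesError μ f g := by
  have hmin : ∀ x, 0 < min (f x) (g x) := fun x ↦ lt_min (hf0 x) (hg0 x)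
  have hsupp : Function.support (fun x ↦ min (f x) (g x)) = univ :=
    eq_univ_of_forall fun x ↦ (hmin x).ne'
  refine half_pos ((integral_pos_iff_support_of_nonneg (fun x ↦ (hmin x).le) (hf.inf hg)).2 ?_)
  rw [hsupp]
  exact NeZero.pos (μ univ)

lemma bayesError_le_half_integral (hf : Integrable f μ) (hg : Integrable g μ) :
    bayesError μ f g ≤ (∫ x, f x ∂μ) / 2 := by
  have : ∫ x, min (f x) (g x) ∂μ ≤ ∫ x, f x ∂μ :=
    integral_mono (hf.inf hg) hf fun x ↦ min_le_left (f x) (g x)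
  exact div_le_div_of_nonneg_right this zero_le_two

lemma bayesError_eq_of_le_of_ge (hf : Integrable f μ) (hg : Integrable g μ) {A : Set Ω}
    (hA : MeasurableSet A) (hle : ∀ x ∈ A, g x ≤ f x) (hge : ∀ x ∉ A, f x ≤ g x) :
    bayesError μ f g = (∫ x in A, g x ∂μ + ∫ x in Aᶜ, f x ∂μ) / 2 := by
  have hmin : Integrable (fun x ↦ min (f x) (g x)) μ := hf.inf hg
  rw [bayesError, ← integral_add_compl hA hmin,
    setIntegral_congr_fun hA fun x hx ↦ min_eq_right (hle x hx),
    setIntegral_congr_fun hA.compl fun x hx ↦ min_eq_left (hge x hx)]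

end BayesError

section Gaussian

lemma setIntegral_gaussianPDFReal (m : ℝ) {v : ℝ≥0} (hv : v ≠ 0) (A : Set ℝ) :
    ∫ x in A, gaussianPDFReal m v x = (gaussianReal m v).real A := by
  rw [Measure.real, gaussianReal_apply_eq_integral m hv, ENNReal.toReal_ofReal]
  exact integral_nonneg fun x ↦ gaussianPDFReal_nonneg m v x

lemma gaussianReal_real_Iic (m : ℝ) {s : ℝ≥0} (hs : s ≠ 0) (x : ℝ) :
    (gaussianReal m (s ^ 2)).real (Iic x) = Phi ((x - m) / s) := by
  have hlaw : (gaussianReal 0 1).map (fun z : ℝ ↦ s * z + m) = gaussianReal m (s ^ 2) := by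
    rw [show (fun z : ℝ ↦ s * z + m) = (· + m) ∘ (s * ·) from rfl,
      ← Measure.map_map (by fun_prop) (by fun_prop),
      gaussianReal_map_const_mul, gaussianReal_map_add_const]
    congr 1
    · ring
    · ext; simp
  have hpre : (fun z : ℝ ↦ s * z + m) ⁻¹' Iic x = Iic ((x - m) / s) := by
    ext z
    simp only [mem_preimage, mem_Iic]
    rw [le_div_iff₀' (by positivity), le_sub_iff_add_le]
  rw [← hlaw, map_measureReal_apply (by fun_prop) measurableSet_Iic, hpre]
  rfl

lemma gaussianReal_real_Icc (m : ℝ) {s : ℝ≥0} (hs : s ≠ 0) {a b : ℝ} (hab : a ≤ b) :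
    (gaussianReal m (s ^ 2)).real (Icc a b) = Phi ((b - m) / s) - Phi ((a - m) / s) := by
  have : NullSingletonClass (gaussianReal m (s ^ 2)) :=
    nullSingletonClass_gaussianReal (pow_ne_zero 2 hs)
  rw [measureReal_congr Ioc_ae_eq_Icc.symm, ← Iic_sdiff_Iic,
    measureReal_sdiff (Iic_subset_Iic.2 hab) measurableSet_Iic,
    gaussianReal_real_Iic m hs, gaussianReal_real_Iic m hs]

lemma Phi_neg (t : ℝ) : Phi (-t) = 1 - Phi t := by
  have : NullSingletonClass (gaussianReal 0 1) := nullSingletonClass_gaussianReal one_ne_zero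
  calc Phi (-t) = ((gaussianReal 0 1).map fun x ↦ -x).real (Iic (-t)) := by
        rw [gaussianReal_map_neg, neg_zero]; rfl
    _ = (gaussianReal 0 1).real (Ici t) := by
        rw [map_measureReal_apply measurable_neg measurableSet_Iic]; simp
    _ = (gaussianReal 0 1).real (Iic t)ᶜ := by
        rw [compl_Iic]; exact measureReal_congr Ioi_ae_eq_Ici.symm
    _ = 1 - Phi t := probReal_compl_eq_one_sub measurableSet_Iic

lemma gaussianPDFReal_sq_eq_exp (m : ℝ) {s : ℝ≥0} (hs : s ≠ 0) (x : ℝ) :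
    gaussianPDFReal m (s ^ 2) x =
      (√(2 * Real.pi))⁻¹ * Real.exp (-(((x - m) / s) ^ 2 + 2 * Real.log s) / 2) := by
  have hs' : (0 : ℝ) < s := by positivity
  have hexp : -(((x - m) / s) ^ 2 + 2 * Real.log s) / 2 =
      -(x - m) ^ 2 / (2 * s ^ 2) - Real.log s := by
    field_simp
    ring
  rw [gaussianPDFReal, hexp, Real.exp_sub, Real.exp_log hs', NNReal.coe_pow,
    Real.sqrt_mul (by positivity), Real.sqrt_sq hs'.le]
  field_simp

lemma gaussianPDFReal_sq_le_iff (m₁ m₂ : ℝ) {s₁ s₂ : ℝ≥0} (hs₁ : s₁ ≠ 0) (hs₂ : s₂ ≠ 0) (x : ℝ) :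
    gaussianPDFReal m₁ (s₁ ^ 2) x ≤ gaussianPDFReal m₂ (s₂ ^ 2) x ↔
      ((x - m₂) / s₂) ^ 2 + 2 * Real.log s₂ ≤ ((x - m₁) / s₁) ^ 2 + 2 * Real.log s₁ := by
  rw [gaussianPDFReal_sq_eq_exp m₁ hs₁, gaussianPDFReal_sq_eq_exp m₂ hs₂,
    mul_le_mul_iff_right₀ (by positivity), Real.exp_le_exp, div_le_div_iff_of_pos_right two_pos,
    neg_le_neg_iff]

lemma bayesError_gaussian_eq (m₁ m₂ : ℝ) {v₁ v₂ : ℝ≥0} (hv₁ : v₁ ≠ 0) (hv₂ : v₂ ≠ 0) {A : Set ℝ}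
    (hA : MeasurableSet A) (hle : ∀ x ∈ A, gaussianPDFReal m₂ v₂ x ≤ gaussianPDFReal m₁ v₁ x)
    (hge : ∀ x ∉ A, gaussianPDFReal m₁ v₁ x ≤ gaussianPDFReal m₂ v₂ x) :
    bayesError volume (gaussianPDFReal m₁ v₁) (gaussianPDFReal m₂ v₂) =
      (1 + (gaussianReal m₂ v₂).real A - (gaussianReal m₁ v₁).real A) / 2 := by
  rw [bayesError_eq_of_le_of_ge (integrable_gaussianPDFReal _ _) (integrable_gaussianPDFReal _ _)
      hA hle hge, setIntegral_gaussianPDFReal m₂ hv₂, setIntegral_gaussianPDFReal m₁ hv₁,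
    probReal_compl_eq_one_sub hA]
  ring

lemma bayesError_gaussian_eq_of_le_iff_mul_nonpos {m₁ m₂ : ℝ} {s₁ s₂ : ℝ≥0} (hs₁ : s₁ ≠ 0)
    (hs₂ : s₂ ≠ 0) {a b : ℝ} (hab : a ≤ b)
    (h : ∀ x, gaussianPDFReal m₂ (s₂ ^ 2) x ≤ gaussianPDFReal m₁ (s₁ ^ 2) x ↔
      (x - a) * (x - b) ≤ 0) :
    bayesError volume (gaussianPDFReal m₁ (s₁ ^ 2)) (gaussianPDFReal m₂ (s₂ ^ 2)) =
      (1 + (Phi ((b - m₂) / s₂) - Phi ((a - m₂) / s₂))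
        - (Phi ((b - m₁) / s₁) - Phi ((a - m₁) / s₁))) / 2 := by
  have hmem (x : ℝ) : gaussianPDFReal m₂ (s₂ ^ 2) x ≤ gaussianPDFReal m₁ (s₁ ^ 2) x ↔
      x ∈ Icc a b := (h x).trans (sub_mul_sub_nonpos_iff x hab)
  rw [bayesError_gaussian_eq m₁ m₂ (pow_ne_zero 2 hs₁) (pow_ne_zero 2 hs₂) measurableSet_Icc
      (fun x ↦ (hmem x).2) (fun x hx ↦ (not_le.1 (mt (hmem x).1 hx)).le),
    gaussianReal_real_Icc m₂ hs₂ hab, gaussianReal_real_Icc m₁ hs₁ hab]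

lemma bayesError_gaussian_eq_of_common_variance {m₁ m₂ : ℝ} (hm : m₁ ≤ m₂) {s : ℝ≥0}
    (hs : s ≠ 0) :
    bayesError volume (gaussianPDFReal m₁ (s ^ 2)) (gaussianPDFReal m₂ (s ^ 2)) =
      Phi (-((m₂ - m₁) / s / 2)) := by
  have hcloser (m m' x : ℝ) : gaussianPDFReal m (s ^ 2) x ≤ gaussianPDFReal m' (s ^ 2) x ↔
      (x - m') ^ 2 ≤ (x - m) ^ 2 := by
    rw [gaussianPDFReal_sq_le_iff m m' hs hs, add_le_add_iff_right, div_pow, div_pow,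
      div_le_div_iff_of_pos_right (by positivity)]
  have hleft : ∀ x ∈ Iic ((m₁ + m₂) / 2),
      gaussianPDFReal m₂ (s ^ 2) x ≤ gaussianPDFReal m₁ (s ^ 2) x := by
    intro x hx
    rw [mem_Iic] at hx
    rw [hcloser]
    nlinarith
  have hright : ∀ x ∉ Iic ((m₁ + m₂) / 2),
      gaussianPDFReal m₁ (s ^ 2) x ≤ gaussianPDFReal m₂ (s ^ 2) x := by
    intro x hx
    rw [mem_Iic, not_le] at hx
    rw [hcloser]
    nlinarith
  have hmid₁ : ((m₁ + m₂) / 2 - m₁) / s = (m₂ - m₁) / s / 2 := by ring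
  have hmid₂ : ((m₁ + m₂) / 2 - m₂) / s = -((m₂ - m₁) / s / 2) := by ring
  rw [bayesError_gaussian_eq m₁ m₂ (pow_ne_zero 2 hs) (pow_ne_zero 2 hs) measurableSet_Iic
    hleft hright, gaussianReal_real_Iic m₂ hs, gaussianReal_real_Iic m₁ hs, hmid₁, hmid₂, Phi_neg]
  ring

end Gaussian

section CalE

lemma sq_sub_one_mul_log_sq_nonneg (g : ℝ) : 0 ≤ (g ^ 2 - 1) * Real.log (g ^ 2) := by
  rcases le_total (g ^ 2) 1 with h | h
  · exact mul_nonneg_of_nonpos_of_nonpos (sub_nonpos.2 h) (Real.log_nonpos (sq_nonneg g) h)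
  · exact mul_nonneg (sub_nonneg.2 h) (Real.log_nonneg h)

variable {r D : ℝ} {g : ℝ≥0}

/-- The two linear factors vanish at the points where the densities of `N(0, 1)` and `N(-r, g²)`
agree, the left-hand side being twice the logarithm of their ratio. -/
lemma sq_add_log_sub_sq_eq_mul (hg : g ≠ 0) (hg1 : (g : ℝ) ^ 2 - 1 ≠ 0)
    (hD : D ^ 2 = r ^ 2 + (g ^ 2 - 1) * Real.log (g ^ 2)) (x : ℝ) :
    ((x + r) / g) ^ 2 + 2 * Real.log g - x ^ 2 = (1 - g ^ 2) / g ^ 2 *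
      ((x - (r - g * D) / (g ^ 2 - 1)) * (x - (r + g * D) / (g ^ 2 - 1))) := by
  rw [Real.log_pow, Nat.cast_ofNat] at hD
  field_simp
  linear_combination (-g ^ 2 * (g ^ 2 - 1)) * hD

lemma gaussianPDFReal_le_standard_iff_mul_nonpos (hg : 1 < g)
    (hD : D ^ 2 = r ^ 2 + (g ^ 2 - 1) * Real.log (g ^ 2)) (x : ℝ) :
    gaussianPDFReal (-r) (g ^ 2) x ≤ gaussianPDFReal 0 1 x ↔
      (x - (r - g * D) / (g ^ 2 - 1)) * (x - (r + g * D) / (g ^ 2 - 1)) ≤ 0 := by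
  have hg0 : g ≠ 0 := (zero_lt_one.trans hg).ne'
  have hd : 0 < (g : ℝ) ^ 2 - 1 := sub_pos.2 (one_lt_pow₀ (by exact_mod_cast hg) two_ne_zero)
  have hcoeff : (1 - (g : ℝ) ^ 2) / g ^ 2 < 0 := div_neg_of_neg_of_pos (by linarith) (by positivity)
  have hcmp : gaussianPDFReal (-r) (g ^ 2) x ≤ gaussianPDFReal 0 1 x ↔
      x ^ 2 ≤ ((x + r) / g) ^ 2 + 2 * Real.log g := by
    simpa using gaussianPDFReal_sq_le_iff (-r) 0 hg0 one_ne_zero x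
  rw [hcmp, ← sub_nonneg, sq_add_log_sub_sq_eq_mul hg0 hd.ne' hD, ← neg_mul_neg,
    mul_nonneg_iff_of_pos_left (neg_pos.2 hcoeff), neg_nonneg]

lemma standard_le_gaussianPDFReal_iff_mul_nonpos (hg0 : g ≠ 0) (hg : g < 1)
    (hD : D ^ 2 = r ^ 2 + (g ^ 2 - 1) * Real.log (g ^ 2)) (x : ℝ) :
    gaussianPDFReal 0 1 x ≤ gaussianPDFReal (-r) (g ^ 2) x ↔
      (x - (r - g * D) / (g ^ 2 - 1)) * (x - (r + g * D) / (g ^ 2 - 1)) ≤ 0 := by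
  have hd : (g : ℝ) ^ 2 - 1 < 0 :=
    sub_neg.2 (pow_lt_one₀ g.coe_nonneg (by exact_mod_cast hg) two_ne_zero)
  have hcoeff : 0 < (1 - (g : ℝ) ^ 2) / g ^ 2 := div_pos (by linarith) (by positivity)
  have hcmp : gaussianPDFReal 0 1 x ≤ gaussianPDFReal (-r) (g ^ 2) x ↔
      ((x + r) / g) ^ 2 + 2 * Real.log g ≤ x ^ 2 := by
    simpa using gaussianPDFReal_sq_le_iff 0 (-r) one_ne_zero hg0 x
  rw [hcmp, ← sub_nonpos, sq_add_log_sub_sq_eq_mul hg0 hd.ne hD, ← neg_nonneg, ← mul_neg,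
    mul_nonneg_iff_of_pos_left hcoeff, neg_nonneg]

lemma bayesError_standard_gaussian_eq (hg0 : g ≠ 0) (hg1 : g ≠ 1) (hD₀ : 0 ≤ D)
    (hD : D ^ 2 = r ^ 2 + (g ^ 2 - 1) * Real.log (g ^ 2)) :
    bayesError volume (gaussianPDFReal 0 1) (gaussianPDFReal (-r) (g ^ 2)) =
      (1 + Phi ((r - g * D) / (g ^ 2 - 1)) - Phi ((r + g * D) / (g ^ 2 - 1))
        + Phi ((r * g + D) / (g ^ 2 - 1)) - Phi ((r * g - D) / (g ^ 2 - 1))) / 2 := by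
  have hsq : (g : ℝ) ^ 2 ≠ 1 := by
    simpa [pow_eq_one_iff_of_nonneg g.coe_nonneg two_ne_zero] using hg1
  have hd : (g : ℝ) ^ 2 - 1 ≠ 0 := sub_ne_zero.2 hsq
  have hminus : ((r - g * D) / (g ^ 2 - 1) - -r) / g = (r * g - D) / (g ^ 2 - 1) := by
    field_simp
    ring
  have hplus : ((r + g * D) / (g ^ 2 - 1) - -r) / g = (r * g + D) / (g ^ 2 - 1) := by
    field_simp
    ring
  have hnum : r - g * D ≤ r + g * D := by linarith [mul_nonneg g.coe_nonneg hD₀]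
  rw [← one_pow (M := ℝ≥0) 2]
  rcases hg1.lt_or_gt with hlt | hgt
  · have hroots : (r + g * D) / (g ^ 2 - 1) ≤ (r - g * D) / (g ^ 2 - 1) :=
      div_le_div_of_nonpos_of_le
        (sub_nonpos.2 (pow_le_one₀ g.coe_nonneg (by exact_mod_cast hlt.le))) hnum
    rw [bayesError_comm, bayesError_gaussian_eq_of_le_iff_mul_nonpos hg0 one_ne_zero hroots
      fun x ↦ by rw [one_pow, standard_le_gaussianPDFReal_iff_mul_nonpos hg0 hlt hD, mul_comm],
      hminus, hplus]
    simp only [sub_zero, NNReal.coe_one, div_one]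
    ring
  · have hroots : (r - g * D) / (g ^ 2 - 1) ≤ (r + g * D) / (g ^ 2 - 1) :=
      div_le_div_of_nonneg_right hnum (sub_nonneg.2 (one_le_pow₀ (by exact_mod_cast hgt.le)))
    rw [bayesError_gaussian_eq_of_le_iff_mul_nonpos one_ne_zero hg0 hroots
      fun x ↦ by rw [one_pow, gaussianPDFReal_le_standard_iff_mul_nonpos hgt hD], hminus, hplus]
    simp only [sub_zero, NNReal.coe_one, div_one]
    ring

lemma calE_one_eq_bayesError (r : ℝ) :
    calE r 1 = bayesError volume (gaussianPDFReal 0 1) (gaussianPDFReal (-r) 1) := by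
  rw [calE, if_pos rfl, ← one_pow (M := ℝ≥0) 2]
  rcases le_total 0 r with hr | hr
  · rw [bayesError_comm,
      bayesError_gaussian_eq_of_common_variance (neg_nonpos.2 hr) one_ne_zero, abs_of_nonneg hr]
    simp
  · rw [bayesError_gaussian_eq_of_common_variance (neg_nonneg.2 hr) one_ne_zero, abs_of_nonpos hr]
    simp

lemma calE_eq_bayesError (r : ℝ) (hg : g ≠ 0) :
    calE r g = bayesError volume (gaussianPDFReal 0 1) (gaussianPDFReal (-r) (g ^ 2)) := by
  rcases eq_or_ne g 1 with rfl | hg1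
  · rw [NNReal.coe_one, one_pow, calE_one_eq_bayesError]
  · have hΔ : 0 ≤ r ^ 2 + ((g : ℝ) ^ 2 - 1) * Real.log (g ^ 2) :=
      add_nonneg (sq_nonneg r) (sq_sub_one_mul_log_sq_nonneg g)
    rw [calE, if_neg (by exact_mod_cast hg1),
      bayesError_standard_gaussian_eq hg hg1 (Real.sqrt_nonneg _) (Real.sq_sqrt hΔ)]
    ring

lemma calE_mem_Ioc (r : ℝ) {g : ℝ} (hg : 0 < g) : calE r g ∈ Ioc 0 (1 / 2) := by
  lift g to ℝ≥0 using hg.le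
  have hg0 : g ≠ 0 := (NNReal.coe_pos.1 hg).ne'
  have hf := integrable_gaussianPDFReal 0 1
  have hh := integrable_gaussianPDFReal (-r) (g ^ 2)
  rw [calE_eq_bayesError r hg0]
  refine ⟨bayesError_pos hf hh (fun x ↦ gaussianPDFReal_pos 0 1 x one_ne_zero)
    fun x ↦ gaussianPDFReal_pos (-r) (g ^ 2) x (pow_ne_zero 2 hg0), ?_⟩
  simpa [integral_gaussianPDFReal_eq_one 0 one_ne_zero] using bayesError_le_half_integral hf hh

end CalE

/-- For every nonzero α, 0 < E(α) ≤ 1/2. -/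
theorem Evec_mem_Ioc {p : ℕ} (hp : 1 ≤ p) (μ0 μ1 : Fin p → ℝ)
    (S0 S1 : Matrix (Fin p) (Fin p) ℝ) (h0 : S0.PosDef) (h1 : S1.PosDef)
    (α : Fin p → ℝ) (hα : α ≠ 0) :
    0 < Evec μ0 μ1 S0 S1 α ∧ Evec μ0 μ1 S0 S1 α ≤ 1/2 := by
  have h0α : 0 < α ⬝ᵥ S0 *ᵥ α := by simpa using h0.dotProduct_mulVec_pos hα
  have h1α : 0 < α ⬝ᵥ S1 *ᵥ α := by simpa using h1.dotProduct_mulVec_pos hα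
  exact calE_mem_Ioc _ (div_pos (Real.sqrt_pos.2 h0α) (Real.sqrt_pos.2 h1α))
end

section
/- Suppose Σ₀ = Σ₁ = Σ is symmetric positive definite and μ₀ ≠ μ₁. Then for every nonzero α ∈ ℝ^p, E(α) = Φ(−|αᵀ(μ₀ − μ₁)| / (2·√(αᵀΣα))); a nonzero α minimizes E if and only if it maximizes the ratio (αᵀ(μ₀ − μ₁))² / (αᵀΣα); and the vector β = Σ⁻¹(μ₀ − μ₁) is such a minimizer, with E(β) = Φ(−(1/2)·√((μ₀ − μ₁)ᵀΣ⁻¹(μ₀ − μ₁))). -/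
/-!
For equal covariance matrices the two projected variances agree, so the error is
`Φ (-√J(α) / 2)` with `J(α) = (αᵀ d)² / (αᵀ Σ α)` and `d = μ₀ - μ₁`. Since `Φ` is strictly
increasing, minimizing the error amounts to maximizing `J`. Writing `αᵀ d = αᵀ Σ (Σ⁻¹ d)`, the
Cauchy–Schwarz inequality for the form `Σ` gives `J(α) ≤ dᵀ Σ⁻¹ d`, with equality at `α = Σ⁻¹ d`.
-/

open MeasureTheory ProbabilityTheory Matrix Filter Set

theorem strictMono_measureReal_Iic {X : Type*} [LinearOrder X] [DenselyOrdered X]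
    [TopologicalSpace X] [OrderClosedTopology X] [MeasurableSpace X] [OpensMeasurableSpace X]
    (μ : Measure X) [IsFiniteMeasure μ] [μ.IsOpenPosMeasure] :
    StrictMono fun x => μ.real (Iic x) := by
  intro a b hab
  have hIoc : 0 < μ.real (Ioc a b) :=
    calc
      0 < μ.real (Ioo a b) :=
        ENNReal.toReal_pos (isOpen_Ioo.measure_ne_zero μ (nonempty_Ioo.2 hab)) (measure_ne_top μ _)
      _ ≤ μ.real (Ioc a b) := measureReal_mono Ioo_subset_Ioc_self
  calc
    μ.real (Iic a) < μ.real (Iic a) + μ.real (Ioc a b) := lt_add_of_pos_right _ hIoc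
    _ = μ.real (Iic b) := by
      rw [← measureReal_union (Iic_disjoint_Ioc le_rfl) measurableSet_Ioc,
        Iic_union_Ioc_eq_Iic hab.le]

theorem isOpenPosMeasure_gaussianReal (m : ℝ) {v : NNReal} (hv : v ≠ 0) :
    (gaussianReal m v).IsOpenPosMeasure :=
  (gaussianReal_absolutelyContinuous' m hv).isOpenPosMeasure

theorem Phi_strictMono : StrictMono Phi :=
  haveI := isOpenPosMeasure_gaussianReal 0 one_ne_zero
  strictMono_measureReal_Iic (gaussianReal 0 1)

theorem calE_one_right (r : ℝ) : calE r 1 = Phi (-(|r| / 2)) :=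
  if_pos rfl

theorem sq_dotProduct_mulVec_le {ι R : Type*} [Fintype ι] [CommRing R] [LinearOrder R]
    [IsStrictOrderedRing R] [StarRing R] [TrivialStar R] {S : Matrix ι ι R}
    (hS : S.PosSemidef) (x y : ι → R) :
    (x ⬝ᵥ S *ᵥ y) ^ 2 ≤ (x ⬝ᵥ S *ᵥ x) * (y ⬝ᵥ S *ᵥ y) := by
  classical
  have nonneg (z : ι → R) : 0 ≤ S.toLinearMap₂' R z z := by
    simpa [toLinearMap₂'_apply'] using hS.dotProduct_mulVec_nonneg z
  have symm : (S.toLinearMap₂' R).IsSymm := by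
    refine ⟨fun z w => ?_⟩
    have hST : Sᵀ = S := by simpa using hS.isHermitian.eq
    rw [RingHom.id_apply, toLinearMap₂'_apply', toLinearMap₂'_apply', dotProduct_comm,
      ← vecMul_transpose, hST, ← dotProduct_mulVec]
  simpa [toLinearMap₂'_apply'] using
    LinearMap.BilinForm.apply_sq_le_of_symm (S.toLinearMap₂' R) nonneg symm x y

theorem mulVec_inv_mulVec {ι R : Type*} [Fintype ι] [DecidableEq ι] [CommRing R]
    {A : Matrix ι ι R} (hA : IsUnit A) (v : ι → R) : A *ᵥ A⁻¹ *ᵥ v = v := by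
  rw [mulVec_mulVec, mul_nonsing_inv A ((isUnit_iff_isUnit_det A).1 hA), one_mulVec]

section FisherRatio

variable {ι K : Type*} [Fintype ι] [Field K]

/-- Fisher's discriminant ratio `(αᵀ d)² / (αᵀ S α)` of the projection along `α`, where `d` is the
difference of the class means and `S` their common covariance matrix. It is `0` by division by
zero when `αᵀ S α = 0`, in particular at `α = 0`. -/
def fisherRatio (S : Matrix ι ι K) (d α : ι → K) : K :=
  (α ⬝ᵥ d) ^ 2 / (α ⬝ᵥ S *ᵥ α)

theorem fisherRatio_inv_mulVec [DecidableEq ι] {S : Matrix ι ι K} (hS : IsUnit S) (d : ι → K) :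
    fisherRatio S d (S⁻¹ *ᵥ d) = d ⬝ᵥ S⁻¹ *ᵥ d := by
  rw [fisherRatio, mulVec_inv_mulVec hS, sq, mul_self_div_self, dotProduct_comm]

theorem fisherRatio_le [DecidableEq ι] [LinearOrder K] [IsStrictOrderedRing K] [StarRing K]
    [TrivialStar K] {S : Matrix ι ι K} (hS : S.PosDef) (d α : ι → K) :
    fisherRatio S d α ≤ d ⬝ᵥ S⁻¹ *ᵥ d := by
  have cauchySchwarz := sq_dotProduct_mulVec_le hS.posSemidef α (S⁻¹ *ᵥ d)
  rw [mulVec_inv_mulVec hS.isUnit, dotProduct_comm (S⁻¹ *ᵥ d), mul_comm] at cauchySchwarz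
  have nonneg (x : ι → K) : 0 ≤ x ⬝ᵥ S *ᵥ x := by
    simpa using hS.posSemidef.dotProduct_mulVec_nonneg x
  have nonneg_inv : 0 ≤ d ⬝ᵥ S⁻¹ *ᵥ d := by
    simpa using hS.inv.posSemidef.dotProduct_mulVec_nonneg d
  exact div_le_of_le_mul₀ (nonneg α) nonneg_inv cauchySchwarz

end FisherRatio

section EqualCovariance

variable {p : ℕ} (μ0 μ1 : Fin p → ℝ) {S : Matrix (Fin p) (Fin p) ℝ} {α γ : Fin p → ℝ}

theorem Evec_self_cov (hα : 0 < α ⬝ᵥ S *ᵥ α) :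
    Evec μ0 μ1 S S α = Phi (-(|α ⬝ᵥ (μ0 - μ1)| / (2 * √(α ⬝ᵥ S *ᵥ α)))) := by
  have hσ : 0 < √(α ⬝ᵥ S *ᵥ α) := Real.sqrt_pos.2 hα
  rw [Evec, div_self hσ.ne', calE_one_right, ← dotProduct_sub, abs_div, abs_of_pos hσ, div_div,
    mul_comm 2]

theorem Evec_self_cov_eq_Phi_sqrt_fisherRatio (hα : 0 < α ⬝ᵥ S *ᵥ α) :
    Evec μ0 μ1 S S α = Phi (-(1 / 2 * √(fisherRatio S (μ0 - μ1) α))) := by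
  rw [Evec_self_cov μ0 μ1 hα, fisherRatio, Real.sqrt_div (sq_nonneg _), Real.sqrt_sq_eq_abs]
  congr 2
  ring

theorem Evec_self_cov_le_iff (hα : 0 < α ⬝ᵥ S *ᵥ α) (hγ : 0 < γ ⬝ᵥ S *ᵥ γ) :
    Evec μ0 μ1 S S α ≤ Evec μ0 μ1 S S γ ↔
      fisherRatio S (μ0 - μ1) γ ≤ fisherRatio S (μ0 - μ1) α := by
  have nonneg : 0 ≤ fisherRatio S (μ0 - μ1) α := div_nonneg (sq_nonneg _) hα.le
  rw [Evec_self_cov_eq_Phi_sqrt_fisherRatio μ0 μ1 hα,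
    Evec_self_cov_eq_Phi_sqrt_fisherRatio μ0 μ1 hγ, Phi_strictMono.le_iff_le, neg_le_neg_iff,
    mul_le_mul_iff_right₀ one_half_pos, Real.sqrt_le_sqrt_iff nonneg]

end EqualCovariance

/-- LDA case: Σ₀ = Σ₁ = Σ, μ₀ ≠ μ₁.  Formula for E, characterization of minimizers as
maximizers of the Rayleigh-type ratio, and β = Σ⁻¹(μ₀ − μ₁) is a minimizer with the
stated minimal error. -/
theorem Evec_equal_cov {p : ℕ} (hp : 1 ≤ p) (μ0 μ1 : Fin p → ℝ)
    (S : Matrix (Fin p) (Fin p) ℝ) (hS : S.PosDef) (hμ : μ0 ≠ μ1) :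
    (∀ α : Fin p → ℝ, α ≠ 0 →
        Evec μ0 μ1 S S α =
          Phi (-(|dotProduct α (μ0 - μ1)| / (2 * Real.sqrt (dotProduct α (S.mulVec α)))))) ∧
    (∀ α : Fin p → ℝ, α ≠ 0 →
        ((∀ γ : Fin p → ℝ, γ ≠ 0 → Evec μ0 μ1 S S α ≤ Evec μ0 μ1 S S γ) ↔
          (∀ γ : Fin p → ℝ, γ ≠ 0 →
            (dotProduct γ (μ0 - μ1))^2 / dotProduct γ (S.mulVec γ) ≤
              (dotProduct α (μ0 - μ1))^2 / dotProduct α (S.mulVec α)))) ∧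
    (∀ α : Fin p → ℝ, α ≠ 0 →
        Evec μ0 μ1 S S (S⁻¹.mulVec (μ0 - μ1)) ≤ Evec μ0 μ1 S S α) ∧
    Evec μ0 μ1 S S (S⁻¹.mulVec (μ0 - μ1)) =
      Phi (-(1/2 * Real.sqrt (dotProduct (μ0 - μ1) (S⁻¹.mulVec (μ0 - μ1))))) := by
  have quad_pos (α : Fin p → ℝ) (hα : α ≠ 0) : 0 < α ⬝ᵥ S *ᵥ α := by
    simpa using hS.dotProduct_mulVec_pos hα
  have β_ne_zero : S⁻¹ *ᵥ (μ0 - μ1) ≠ 0 := fun h =>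
    sub_ne_zero.2 hμ (mulVec_injective_of_isUnit hS.inv.isUnit (h.trans (mulVec_zero _).symm))
  have ratio_β := fisherRatio_inv_mulVec hS.isUnit (μ0 - μ1)
  refine ⟨fun α hα => Evec_self_cov μ0 μ1 (quad_pos α hα), fun α hα => ?_, fun α hα => ?_, ?_⟩
  · exact forall₂_congr fun γ hγ =>
      Evec_self_cov_le_iff μ0 μ1 (quad_pos α hα) (quad_pos γ hγ)
  · rw [Evec_self_cov_le_iff μ0 μ1 (quad_pos _ β_ne_zero) (quad_pos α hα), ratio_β]
    exact fisherRatio_le hS (μ0 - μ1) α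
  · rw [Evec_self_cov_eq_Phi_sqrt_fisherRatio μ0 μ1 (quad_pos _ β_ne_zero), ratio_β]
end
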